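/- In the randomized controlled trial model with responses, for every attribute a : N → {0,1} with |a| = #{i : a(i)=1} < n and every position k ∈ {1,…,s}: Pr(R_k = 1 | (T_k = 1) ∩ (A_k = 0)) = (1/(n−|a|))·Σ_{i : a(i)=0} τ_i and Pr(R_k = 1 | (T_k = 0) ∩ (A_k = 0)) = (1/(n−|a|))·Σ_{i : a(i)=0} ν_i, where A_k = a(i_k). -/

import Mathlib

/- Randomized controlled trial model with responses:
   a uniformly random injective s-tuple of individuals from `Fin n`
   (encoded as `Fin s ↪ Fin n`), an independent uniformly random t-element
   subset of positions `Fin s` (the treated positions), and, given these,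
   independent Bernoulli responses at each position: position `k` responds
   with probability `τ (i_k)` if treated and `ν (i_k)` if untreated. -/

open Finset BigOperators
open scoped Classical

namespace RCT

/-- Probability weight of a sample point `(σ, T, R)`. -/
noncomputable def w (n s t : ℕ) (τ ν : Fin n → ℝ)
    (ω : (Fin s ↪ Fin n) × Finset (Fin s) × (Fin s → Bool)) : ℝ :=
  ((Fintype.card (Fin s ↪ Fin n) : ℝ))⁻¹ *
    (if ω.2.1.card = t then ((s.choose t : ℝ))⁻¹ else 0) *
    ∏ k : Fin s,
      (if ω.2.2 k = true
        then (if k ∈ ω.2.1 then τ (ω.1 k) else ν (ω.1 k))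
        else 1 - (if k ∈ ω.2.1 then τ (ω.1 k) else ν (ω.1 k)))

/-- Probability of an event. -/
noncomputable def Pr (n s t : ℕ) (τ ν : Fin n → ℝ)
    (E : (Fin s ↪ Fin n) × Finset (Fin s) × (Fin s → Bool) → Prop) : ℝ :=
  ∑ ω : (Fin s ↪ Fin n) × Finset (Fin s) × (Fin s → Bool),
    if E ω then w n s t τ ν ω else 0

/-- Conditional probability `Pr (E | F)`. -/
noncomputable def cPr (n s t : ℕ) (τ ν : Fin n → ℝ)
    (E F : (Fin s ↪ Fin n) × Finset (Fin s) × (Fin s → Bool) → Prop) : ℝ :=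
  Pr n s t τ ν (fun ω => E ω ∧ F ω) / Pr n s t τ ν F

/-- Expectation of a real-valued random variable. -/
noncomputable def Ex (n s t : ℕ) (τ ν : Fin n → ℝ)
    (f : (Fin s ↪ Fin n) × Finset (Fin s) × (Fin s → Bool) → ℝ) : ℝ :=
  ∑ ω : (Fin s ↪ Fin n) × Finset (Fin s) × (Fin s → Bool), w n s t τ ν ω * f ω

theorem sum_resp {s : ℕ} (p : Fin s → ℝ) :
    ∑ R : Fin s → Bool, ∏ j, (if R j = true then p j else 1 - p j) = 1 := by
  have h := Finset.prod_univ_sum (fun _ : Fin s => (univ : Finset Bool))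
    (fun j b => if b = true then p j else 1 - p j)
  rw [Fintype.piFinset_univ] at h
  rw [← h]
  simp

theorem sum_resp_true {s : ℕ} (p : Fin s → ℝ) (k : Fin s) :
    ∑ R : Fin s → Bool, (if R k = true then
      ∏ j, (if R j = true then p j else 1 - p j) else 0) = p k := by
  have h := Finset.prod_univ_sum (fun _ : Fin s => (univ : Finset Bool))
    (fun j b => if b = true then p j else if j = k then 0 else 1 - p j)
  rw [Fintype.piFinset_univ] at h
  have h2 : ∀ R : Fin s → Bool, (if R k = true then
      ∏ j, (if R j = true then p j else 1 - p j) else 0) =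
      ∏ j, (if R j = true then p j else if j = k then 0 else 1 - p j) := by
    intro R
    split_ifs with hR
    · apply Finset.prod_congr rfl
      intro j _
      by_cases hj : j = k
      · subst hj; simp [hR]
      · simp [hj]
    · symm
      apply Finset.prod_eq_zero (Finset.mem_univ k)
      simp [hR]
  rw [Finset.sum_congr rfl (fun R _ => h2 R), ← h]
  rw [Finset.prod_eq_single k]
  · simp
  · intro j _ hj
    simp [hj]
  · simp

theorem sum_emb {n s : ℕ} (hsn : s ≤ n) (k : Fin s) :
    ∃ C : ℝ, C ≠ 0 ∧ ∀ g : Fin n → ℝ, ∑ σ : Fin s ↪ Fin n, g (σ k) = C * ∑ i, g i := by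
  have hs : 0 < s := k.pos
  let i0 : Fin n := Fin.castLE hsn k
  have hc : ∀ i : Fin n, (univ.filter (fun σ : Fin s ↪ Fin n => σ k = i)).card =
      (univ.filter (fun σ : Fin s ↪ Fin n => σ k = i0)).card := by
    intro i
    apply Finset.card_equiv ((Equiv.refl (Fin s)).embeddingCongr (Equiv.swap i i0))
    intro σ
    simp only [Finset.mem_filter, Finset.mem_univ, true_and]
    have : ((Equiv.refl (Fin s)).embeddingCongr (Equiv.swap i i0) σ) k
      = Equiv.swap i i0 (σ k) := by simp [Equiv.embeddingCongr]
    rw [this, Equiv.swap_apply_eq_iff, Equiv.swap_apply_right]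
  refine ⟨((univ.filter (fun σ : Fin s ↪ Fin n => σ k = i0)).card : ℝ), ?_, ?_⟩
  · have : (univ.filter (fun σ : Fin s ↪ Fin n => σ k = i0)).Nonempty :=
      ⟨Fin.castLEEmb hsn, by simp [i0]⟩
    exact_mod_cast this.card_pos.ne'
  · intro g
    rw [← Finset.sum_fiberwise (univ : Finset (Fin s ↪ Fin n)) (fun σ => σ k), Finset.mul_sum]
    apply Finset.sum_congr rfl
    intro i _
    rw [Finset.sum_congr rfl (g := fun _ => g i)
      (fun σ hσ => by rw [(Finset.mem_filter.mp hσ).2]), Finset.sum_const, hc i, nsmul_eq_mul]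

theorem cPr_aux (n s t : ℕ) (hts : t < s) (hsn : s ≤ n)
    (τ ν u : Fin n → ℝ) (b : Fin n → Prop) (hb : ∃ i, b i) (k : Fin s)
    (Q : Finset (Fin s) → Prop) (hQ : ∃ T, T.card = t ∧ Q T)
    (hu : ∀ T i, Q T → (if k ∈ T then τ i else ν i) = u i) :
    cPr n s t τ ν (fun ω => ω.2.2 k = true) (fun ω => Q ω.2.1 ∧ b (ω.1 k)) =
      (∑ i ∈ univ.filter b, u i) / ((univ.filter b).card : ℝ) := by
  obtain ⟨C, hC, hg⟩ := sum_emb hsn k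
  set M : ℝ := ((Fintype.card (Fin s ↪ Fin n) : ℝ))⁻¹ with hM
  set c : Finset (Fin s) → ℝ := fun T =>
    if Q T then (if T.card = t then ((s.choose t : ℝ))⁻¹ else 0) else 0 with hcdef
  have hch : (0 : ℝ) < ((s.choose t : ℝ))⁻¹ := by
    have := Nat.choose_pos hts.le
    positivity
  have hM0 : M ≠ 0 := by
    have : Nonempty (Fin s ↪ Fin n) := ⟨Fin.castLEEmb hsn⟩
    exact inv_ne_zero (by exact_mod_cast Fintype.card_ne_zero)
  have hK : (∑ T, c T) ≠ 0 := by
    obtain ⟨T, hT, hQT⟩ := hQ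
    apply ne_of_gt
    apply Finset.sum_pos'
    · intro T _
      simp only [hcdef]
      split_ifs <;> first | exact hch.le | exact le_rfl
    · exact ⟨T, Finset.mem_univ _, by simpa [hcdef, hT, hQT] using Nat.choose_pos hts.le⟩
  have h1 : Pr n s t τ ν (fun ω => Q ω.2.1 ∧ b (ω.1 k)) =
      M * (∑ T, c T) * (C * ∑ i, if b i then 1 else 0) := by
    rw [← hg, Pr, Fintype.sum_prod_type, Finset.mul_sum]
    refine Finset.sum_congr rfl fun σ _ => ?_
    rw [Fintype.sum_prod_type, Finset.mul_sum, Finset.sum_mul]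
    refine Finset.sum_congr rfl fun T _ => ?_
    have := sum_resp (fun j => if j ∈ T then τ (σ j) else ν (σ j))
    by_cases h : Q T ∧ b (σ k)
    · simp only [w, h, and_self, if_true, hcdef]
      refine Eq.trans ?_ (congrArg (fun x => (M * if T.card = t then ((s.choose t : ℝ))⁻¹ else 0) * x) this)
      rw [Finset.mul_sum]
    · simp only [h, if_false, hcdef]
      by_cases hq : Q T
      · have : ¬ b (σ k) := fun hh => h ⟨hq, hh⟩
        simp [this]
      · simp [hq]
  have h2 : Pr n s t τ ν (fun ω => ω.2.2 k = true ∧ Q ω.2.1 ∧ b (ω.1 k)) =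
      M * (∑ T, c T) * (C * ∑ i, if b i then u i else 0) := by
    rw [← hg (fun i => if b i then u i else 0), Pr, Fintype.sum_prod_type, Finset.mul_sum]
    refine Finset.sum_congr rfl fun σ _ => ?_
    rw [Fintype.sum_prod_type, Finset.mul_sum, Finset.sum_mul]
    refine Finset.sum_congr rfl fun T _ => ?_
    have := sum_resp_true (fun j => if j ∈ T then τ (σ j) else ν (σ j)) k
    by_cases h : Q T ∧ b (σ k)
    · simp only [hu T _ h.1] at this
      simp only [w, h, and_self, and_true, if_true, hcdef]
      rw [← this, Finset.mul_sum]
      refine Finset.sum_congr rfl fun R _ => ?_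
      by_cases hR : R k = true <;> simp only [hR, if_true, if_false, mul_zero, Bool.false_eq_true] <;> rfl
    · simp only [h, and_false, if_false, hcdef]
      by_cases hq : Q T
      · have : ¬ b (σ k) := fun hh => h ⟨hq, hh⟩
        simp [this]
      · simp [hq]
  rw [cPr, h1, h2, ← Finset.sum_filter b u, ← Finset.sum_filter b (fun _ => (1 : ℝ)),
    Finset.sum_const, nsmul_eq_mul, mul_one, ← mul_assoc, ← mul_assoc]
  exact mul_div_mul_left _ _ (mul_ne_zero (mul_ne_zero hM0 hK) hC)

/-- Conditional response probabilities given treatment status and `A_k = 0`: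
`Pr(R_k = 1 | (T_k = 1) ∩ (A_k = 0)) = (1/(n−|a|))·Σ_{i : a i = 0} τ i` and
`Pr(R_k = 1 | (T_k = 0) ∩ (A_k = 0)) = (1/(n−|a|))·Σ_{i : a i = 0} ν i`. -/
theorem response_given_treatment_and_attribute_zero (n s t : ℕ) (ht : 0 < t) (hts : t < s) (hsn : s ≤ n)
    (τ ν : Fin n → ℝ) (hτ : ∀ i, τ i ∈ Set.Icc (0 : ℝ) 1) (hν : ∀ i, ν i ∈ Set.Icc (0 : ℝ) 1)
    (a : Fin n → Fin 2) (ha : (univ.filter (fun i => a i = 1)).card < n) (k : Fin s) :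
    cPr n s t τ ν (fun ω => ω.2.2 k = true) (fun ω => k ∈ ω.2.1 ∧ a (ω.1 k) = 0) =
      (1 / ((n : ℝ) - ((univ.filter (fun i => a i = 1)).card : ℝ))) *
        ∑ i ∈ univ.filter (fun i => a i = 0), τ i ∧
    cPr n s t τ ν (fun ω => ω.2.2 k = true) (fun ω => k ∉ ω.2.1 ∧ a (ω.1 k) = 0) =
      (1 / ((n : ℝ) - ((univ.filter (fun i => a i = 1)).card : ℝ))) *
        ∑ i ∈ univ.filter (fun i => a i = 0), ν i := by
  have hcard : (((univ.filter (fun i => a i = 0)).card : ℕ) : ℝ) =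
      (n : ℝ) - ((univ.filter (fun i => a i = 1)).card : ℝ) := by
    have h := Finset.card_filter_add_card_filter_not (s := (univ : Finset (Fin n)))
      (fun i => a i = 1)
    have h2 : (univ.filter (fun i => ¬ a i = 1)) = univ.filter (fun i => a i = 0) := by
      ext i
      simp only [Finset.mem_filter, Finset.mem_univ, true_and]
      omega
    rw [h2, Finset.card_univ, Fintype.card_fin] at h
    rw [eq_sub_iff_add_eq]
    exact_mod_cast (by omega)
  have hb : ∃ i, a i = 0 := by
    by_contra hcon
    push Not at hcon
    have : univ.filter (fun i => a i = 1) = univ := by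
      ext i
      have := hcon i
      simp only [Finset.mem_filter, Finset.mem_univ, true_and, iff_true]
      omega
    rw [this] at ha
    simp at ha
  constructor
  · rw [← hcard, one_div, inv_mul_eq_div]
    have key := cPr_aux n s t hts hsn τ ν τ (fun i => a i = 0) hb k (fun T => k ∈ T) ?_ ?_
    · convert key
    · obtain ⟨T, h1, _, h2⟩ := Finset.exists_subsuperset_card_eq
        (Finset.subset_univ ({k} : Finset (Fin s))) (n := t) (by rw [Finset.card_singleton]; exact ht)
        (by simpa using hts.le)
      exact ⟨T, h2, by simpa using h1⟩
    · intro T i h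
      simp [h]
  · rw [← hcard, one_div, inv_mul_eq_div]
    have key := cPr_aux n s t hts hsn τ ν ν (fun i => a i = 0) hb k (fun T => k ∉ T) ?_ ?_
    · convert key
    · obtain ⟨T, h1, h2⟩ := Finset.exists_subset_card_eq
        (s := (univ : Finset (Fin s)).erase k) (n := t)
        (by rw [Finset.card_erase_of_mem (Finset.mem_univ k)]; simp; omega)
      exact ⟨T, h2, fun hk => by simpa using h1 hk⟩
    · intro T i h
      simp [h]

end RCT
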